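/- For every real number k > 1 there exists a real number p_k > max(2, k+1) such that for every real p ≥ p_k the following holds: for every real ψ > 0 and every g : ℝ → ℝ satisfying g(0) = 0 and, for every s ∈ ℝ, HasDerivAt g ((1 + |g(s)|^k)^(-1/2)) s, the derivative function deriv h of h(s) = ψ · |g(s)|^(p−1) · g(s) · (1 + |g(s)|^k)^(-1/2) is strictly convex on all of ℝ. -/

import Mathlib

/-!
Write `A = 1 + |g|^k`, so that `g' = A^(-1/2)`. Since `t * (d/dt)(1 + |t|^k) = k * (A - 1)` at
`t = g`, differentiating a term `|g|^q * A^m` along `g` gives a combination of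
`|g|^(q-2) * g * A^(m-1/2)` and `|g|^(q-2) * g * A^(m-3/2)`. Starting from
`h = ψ * |g|^(p-1) * g * A^(-1/2)`, two differentiations yield
`h' = ψ * |g|^(p-1) * ((p - k/2) * A^(-1) + (k/2) * A^(-2))` and
`h'' = ψ * (c₁ * F (-3/2) + c₂ * F (-5/2) + c₃ * F (-7/2)) ∘ g`, where
`F m t = |t|^(p-3) * t * (1 + |t|^k)^m` and all `cᵢ` are positive once `p` is large. Each `F m` is
odd, and it is strictly increasing as soon as the growth exponent `p - 2 + m * k` is positive. With
`m ≥ -7/2`, the choice `p_k = 4 * k + 4` makes everything positive, so `h''` is strictly increasing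
and `h'` is strictly convex.
-/

lemma one_add_abs_rpow_pos (k t : ℝ) : 0 < 1 + |t| ^ k := by positivity

lemma hasDerivAt_one_add_abs_rpow_rpow {k : ℝ} (hk : 1 < k) (m t : ℝ) :
    HasDerivAt (fun t : ℝ => (1 + |t| ^ k) ^ m)
      (k * |t| ^ (k - 2) * t * m * (1 + |t| ^ k) ^ (m - 1)) t :=
  ((hasDerivAt_abs_rpow t hk).const_add 1).rpow_const (Or.inl (one_add_abs_rpow_pos k t).ne')

lemma abs_rpow_sub_two_mul_self_mul_self {q : ℝ} (hq : 1 < q) (t : ℝ) :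
    |t| ^ (q - 2) * t * t = |t| ^ q := by
  rcases eq_or_ne t 0 with rfl | ht
  · simp [Real.zero_rpow (by linarith : q ≠ 0)]
  · have h0 : 0 < |t| := abs_pos.mpr ht
    rw [mul_assoc, ← abs_mul_abs_self t, ← mul_assoc, ← Real.rpow_add_one h0.ne',
      ← Real.rpow_add_one h0.ne']
    congr 1
    ring

lemma one_add_abs_rpow_rpow_eq (k m t : ℝ) :
    (1 + |t| ^ k) ^ m = (1 + |t| ^ k) ^ (m - 1) * (1 + |t| ^ k) := by
  rw [← Real.rpow_add_one (one_add_abs_rpow_pos k t).ne']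
  congr 1
  ring

lemma hasDerivAt_even_term {k q : ℝ} (hk : 1 < k) (hq : 1 < q) (m t : ℝ) :
    HasDerivAt (fun t : ℝ => |t| ^ q * (1 + |t| ^ k) ^ m)
      (|t| ^ (q - 2) * t *
        ((q + m * k) * (1 + |t| ^ k) ^ m - m * k * (1 + |t| ^ k) ^ (m - 1))) t := by
  refine ((hasDerivAt_abs_rpow t hq).mul
    (hasDerivAt_one_add_abs_rpow_rpow hk m t)).congr_deriv ?_
  rw [one_add_abs_rpow_rpow_eq k m t, ← abs_rpow_sub_two_mul_self_mul_self hq t,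
    ← abs_rpow_sub_two_mul_self_mul_self hk t]
  ring

lemma hasDerivAt_odd_term {k q : ℝ} (hk : 1 < k) (hq : 1 < q) (m t : ℝ) :
    HasDerivAt (fun t : ℝ => |t| ^ q * t * (1 + |t| ^ k) ^ m)
      (|t| ^ q *
        ((q + 1 + m * k) * (1 + |t| ^ k) ^ m - m * k * (1 + |t| ^ k) ^ (m - 1))) t := by
  refine (((hasDerivAt_abs_rpow t hq).mul (hasDerivAt_id t)).mul
    (hasDerivAt_one_add_abs_rpow_rpow hk m t)).congr_deriv ?_
  simp only [id, Pi.mul_apply]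
  rw [one_add_abs_rpow_rpow_eq k m t, ← abs_rpow_sub_two_mul_self_mul_self hq t,
    ← abs_rpow_sub_two_mul_self_mul_self hk t]
  ring

lemma strictMono_odd_term {k q m : ℝ} (hk : 1 < k) (hq : 1 < q) (hm : m ≤ 0)
    (hpos : 0 < q + 1 + m * k) :
    StrictMono (fun t : ℝ => |t| ^ q * t * (1 + |t| ^ k) ^ m) := by
  apply strictMono_of_odd_strictMonoOn_nonneg
  · intro t
    simp only [abs_neg]
    ring
  · apply strictMonoOn_of_deriv_pos (convex_Ici 0)
    · exact fun t _ => (hasDerivAt_odd_term hk hq m t).continuousAt.continuousWithinAt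
    · intro t ht
      rw [interior_Ici] at ht
      have ht' : 0 < |t| := abs_pos.mpr (ne_of_gt ht)
      have hA := one_add_abs_rpow_pos k t
      rw [(hasDerivAt_odd_term hk hq m t).deriv]
      have h1 := mul_pos hpos (Real.rpow_pos_of_pos hA m)
      have h2 : 0 ≤ -(m * k) * (1 + |t| ^ k) ^ (m - 1) :=
        mul_nonneg (by nlinarith) (Real.rpow_pos_of_pos hA _).le
      exact mul_pos (Real.rpow_pos_of_pos ht' q) (by linarith)

section Flow

variable {k : ℝ} {g : ℝ → ℝ}

lemma strictMono_of_flow (hg : ∀ s : ℝ, HasDerivAt g ((1 + |g s| ^ k) ^ (-(1:ℝ)/2)) s) :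
    StrictMono g :=
  strictMono_of_deriv_pos fun s => by
    rw [(hg s).deriv]
    exact Real.rpow_pos_of_pos (one_add_abs_rpow_pos k (g s)) _

lemma one_add_abs_rpow_rpow_mul_half (k m t : ℝ) {n : ℝ} (h : m + -(1:ℝ)/2 = n) :
    (1 + |t| ^ k) ^ m * (1 + |t| ^ k) ^ (-(1:ℝ)/2) = (1 + |t| ^ k) ^ n := by
  rw [← Real.rpow_add (one_add_abs_rpow_pos k t), h]

lemma hasDerivAt_transformed (hk : 1 < k) {p : ℝ} (hp : 2 < p) (ψ : ℝ)
    (hg : ∀ s : ℝ, HasDerivAt g ((1 + |g s| ^ k) ^ (-(1:ℝ)/2)) s) (s : ℝ) :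
    HasDerivAt (fun s => ψ * |g s| ^ (p - 1) * g s * (1 + |g s| ^ k) ^ (-(1:ℝ)/2))
      (ψ * ((p - k / 2) * (|g s| ^ (p - 1) * (1 + |g s| ^ k) ^ (-1:ℝ))
        + k / 2 * (|g s| ^ (p - 1) * (1 + |g s| ^ k) ^ (-2:ℝ)))) s := by
  have h := ((hasDerivAt_odd_term hk (by linarith : 1 < p - 1) (-(1:ℝ)/2) (g s)).comp s
    (hg s)).const_mul ψ
  refine (h.congr_deriv ?_).congr_of_eventuallyEq (Filter.Eventually.of_forall fun x => ?_)
  · rw [← one_add_abs_rpow_rpow_mul_half k (-(1:ℝ)/2) (g s) (n := -1) (by norm_num),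
      ← one_add_abs_rpow_rpow_mul_half k (-(1:ℝ)/2 - 1) (g s) (n := -2) (by norm_num)]
    ring
  · simp only [Function.comp]
    ring

lemma hasDerivAt_deriv_transformed (hk : 1 < k) {p : ℝ} (hp : 2 < p) (ψ : ℝ)
    (hg : ∀ s : ℝ, HasDerivAt g ((1 + |g s| ^ k) ^ (-(1:ℝ)/2)) s) (s : ℝ) :
    HasDerivAt (fun s => ψ * ((p - k / 2) * (|g s| ^ (p - 1) * (1 + |g s| ^ k) ^ (-1:ℝ))
        + k / 2 * (|g s| ^ (p - 1) * (1 + |g s| ^ k) ^ (-2:ℝ))))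
      (ψ * ((p - k / 2) * (p - 1 - k) * (|g s| ^ (p - 3) * g s * (1 + |g s| ^ k) ^ (-(3:ℝ)/2))
        + ((p - k / 2) * k + k / 2 * (p - 1 - 2 * k)) *
          (|g s| ^ (p - 3) * g s * (1 + |g s| ^ k) ^ (-(5:ℝ)/2))
        + k ^ 2 * (|g s| ^ (p - 3) * g s * (1 + |g s| ^ k) ^ (-(7:ℝ)/2)))) s := by
  have h1 := ((hasDerivAt_even_term hk (by linarith : 1 < p - 1) (-1) (g s)).comp s
    (hg s)).const_mul (p - k / 2)
  have h2 := ((hasDerivAt_even_term hk (by linarith : 1 < p - 1) (-2) (g s)).comp s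
    (hg s)).const_mul (k / 2)
  refine ((h1.add h2).const_mul ψ).congr_deriv ?_
  rw [← one_add_abs_rpow_rpow_mul_half k (-1) (g s) (n := -(3:ℝ)/2) (by norm_num),
    ← one_add_abs_rpow_rpow_mul_half k (-2) (g s) (n := -(5:ℝ)/2) (by norm_num),
    ← one_add_abs_rpow_rpow_mul_half k (-3) (g s) (n := -(7:ℝ)/2) (by norm_num),
    show (-1:ℝ) - 1 = -2 by norm_num, show (-2:ℝ) - 1 = -3 by norm_num,
    show p - 1 - 2 = p - 3 by ring]
  ring

end Flow

/-- For `k > 1` there is `p_k > max 2 (k+1)` such that for all `p ≥ p_k` the derivative of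
the transformed nonlinearity `h(s) = ψ · |g s|^(p-1) · g s · (1 + |g s|^k)^(-1/2)` is
strictly convex on all of `ℝ`, for every `ψ > 0`. -/
theorem deriv_transformed_strictly_convex_univ (k : ℝ) (hk : 1 < k) :
    ∃ p_k : ℝ, max 2 (k + 1) < p_k ∧ ∀ p : ℝ, p_k ≤ p → ∀ ψ : ℝ, 0 < ψ →
      ∀ g : ℝ → ℝ, g 0 = 0 →
        (∀ s : ℝ, HasDerivAt g ((1 + |g s| ^ k) ^ (-(1:ℝ)/2)) s) →
        StrictConvexOn ℝ (Set.univ : Set ℝ)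
          (deriv (fun s => ψ * |g s| ^ (p - 1) * g s * (1 + |g s| ^ k) ^ (-(1:ℝ)/2))) := by
  refine ⟨4 * k + 4, max_lt (by linarith) (by linarith), fun p hp ψ hψ g _ hg => ?_⟩
  have hp2 : 2 < p := by linarith
  rw [show deriv (fun s => ψ * |g s| ^ (p - 1) * g s * (1 + |g s| ^ k) ^ (-(1:ℝ)/2)) = _ from
    funext fun s => (hasDerivAt_transformed hk hp2 ψ hg s).deriv]
  have hderiv := hasDerivAt_deriv_transformed hk hp2 ψ hg
  refine StrictMono.strictConvexOn_univ_of_deriv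
    (continuous_iff_continuousAt.mpr fun s => (hderiv s).continuousAt) ?_
  rw [funext fun s => (hderiv s).deriv]
  intro x y hxy
  have hgxy := strictMono_of_flow hg hxy
  have hq : 1 < p - 3 := by linarith
  have m1 := strictMono_odd_term (m := -(3:ℝ)/2) hk hq (by norm_num) (by linarith) hgxy
  have m2 := strictMono_odd_term (m := -(5:ℝ)/2) hk hq (by norm_num) (by linarith) hgxy
  have m3 := strictMono_odd_term (m := -(7:ℝ)/2) hk hq (by norm_num) (by linarith) hgxy
  have c1 : 0 < (p - k / 2) * (p - 1 - k) := mul_pos (by linarith) (by linarith)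
  have c2 : 0 < (p - k / 2) * k + k / 2 * (p - 1 - 2 * k) :=
    add_pos (mul_pos (by linarith) (by linarith)) (mul_pos (by linarith) (by linarith))
  have c3 : 0 < k ^ 2 := by positivity
  exact mul_lt_mul_of_pos_left (add_lt_add (add_lt_add (mul_lt_mul_of_pos_left m1 c1)
    (mul_lt_mul_of_pos_left m2 c2)) (mul_lt_mul_of_pos_left m3 c3)) hψ
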